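/- arXiv:hep-th/0602057 — 2 statements merged into one kernel-verified Lean document; each statement's English description precedes it below -/
import Mathlib

section
/- Let r ≥ 1 and work in the field ℚ(q_1,…,q_r) of rational functions in r indeterminates over ℚ. Let λ_1 ≥ λ_2 ≥ … ≥ λ_r be integers with λ_r = 0, and let H_m denote the complete homogeneous symmetric polynomial of degree m in the 2r elements q_1,…,q_r, q_1^{−1},…,q_r^{−1}. Then (the Jacobi–Trudy identity for the symmetric tensor representations of Spin(2r), in alternant form): det[ q_i^{λ_j + r − j} + q_i^{−(λ_j + r − j)} ]_{i,j=1}^{r} = 2 · det[ H_{λ_j + i − j} − H_{λ_j − i − j} ]_{i,j=1}^{r} · det[ (q_i + q_i^{−1})^{r − j} ]_{i,j=1}^{r}. -/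
/-!
Put `H(t) = ∑ H_m t^m = ∏_l 1 / ((1 - q_l t) (1 - q_l⁻¹ t))`, and let `ε_i(a)` be `1` for `a = 0`
and `q_i^a + q_i^{-a}` for `a > 0`. The generating function of `ε_i` is
`(1 - t²) / ((1 - q_i t) (1 - q_i⁻¹ t)) = N_i(t) H(t)`, where
`N_i(t) = (1 - t²) ∏_{l ≠ i} (1 - q_l t) (1 - q_l⁻¹ t)` is an antipalindromic polynomial of degree
`2r`. Pairing its coefficients of `t^k` and `t^{2r-k}` gives (`symPow_eq_sum`)
`ε_i(a) = ∑_{k < r} c_{ik} (H_{a-k} - H_{a-2r+k})`, with `c_{ik}` the coefficient of `t^k` in `N_i`.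

For `a = λ_j + r - j` (with `j` counted from `1`) this factors the matrix `ε_i(λ_j + r - j)` as the
coefficient matrix times the Jacobi–Trudi matrix (`det_symPow_eq`). For `λ = 0` the Jacobi–Trudi
matrix is unitriangular, so the determinant of the coefficient matrix is `det ε_i(r - j)`; as
`ε_i(n)` is a monic polynomial of degree `n` in `q_i + q_i⁻¹`, this is
`det (q_i + q_i⁻¹)^{r - j}` (`det_symPow`, `det_numer_coeff`). The factor `2` is the discrepancy
between `ε_i(0) = 1` and `q_i^0 + q_i^0 = 2`, which affects exactly the last column since
`λ_r = 0`.
-/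

open Finset MvPolynomial

/-- Complete homogeneous symmetric polynomial of degree `m` (`ℤ`-indexed; zero for `m < 0`)
in the family of elements `x : ι → R`: the sum of all monomials of total degree `m`. -/
noncomputable def hpoly {R : Type*} [CommRing R] {ι : Type*} [Fintype ι] [DecidableEq ι]
    (x : ι → R) (m : ℤ) : R :=
  if m < 0 then 0
  else ∑ d ∈ (Fintype.piFinset fun _ : ι => Finset.range (m.toNat + 1)).filter
      (fun d => ∑ i, d i = m.toNat),
    ∏ i, x i ^ d i

/-! ### Power sums in `x` and `x⁻¹` as polynomials in `x + x⁻¹` -/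

/-- The sequence `1, x + x⁻¹, x² + x⁻², x³ + x⁻³, …`. The initial value is `1` and not
`x⁰ + x⁰ = 2`: with this choice the generating function is `(1 - t²) / ((1 - x t) (1 - x⁻¹ t))`. -/
def symPow {K : Type*} [Field K] (x : K) (a : ℕ) : K :=
  if a = 0 then 1 else x ^ a + x⁻¹ ^ a

/-- The monic polynomial of degree `n` that expresses `symPow x n` in terms of `x + x⁻¹`;
for `n ≥ 1` it is the rescaled Chebyshev polynomial of the first kind. -/
noncomputable def symPowPoly (K : Type*) [Field K] : ℕ → Polynomial K
  | 0 => 1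
  | 1 => Polynomial.X
  | 2 => Polynomial.X ^ 2 - 2
  | n + 3 => Polynomial.X * symPowPoly K (n + 2) - symPowPoly K (n + 1)

lemma symPowPoly_monic_natDegree (K : Type*) [Field K] (n : ℕ) :
    (symPowPoly K n).Monic ∧ (symPowPoly K n).natDegree = n := by
  induction n using Nat.strong_induction_on with
  | _ n ih =>
    match n, ih with
    | 0, _ => simp [symPowPoly]
    | 1, _ => simp [symPowPoly, Polynomial.monic_X]
    | 2, _ =>
      have h : symPowPoly K 2 = Polynomial.X ^ 2 - Polynomial.C 2 := by
        rw [symPowPoly, map_ofNat]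
      rw [h]
      exact ⟨Polynomial.monic_X_pow_sub_C 2 two_ne_zero, Polynomial.natDegree_X_pow_sub_C⟩
    | n + 3, ih =>
      obtain ⟨m2, d2⟩ := ih (n + 2) (by omega)
      obtain ⟨m1, d1⟩ := ih (n + 1) (by omega)
      have dX : (Polynomial.X * symPowPoly K (n + 2)).natDegree = n + 3 := by
        rw [Polynomial.natDegree_X_mul m2.ne_zero, d2]
      have hlt : (symPowPoly K (n + 1)).natDegree
          < (Polynomial.X * symPowPoly K (n + 2)).natDegree := by omega
      rw [symPowPoly]
      refine ⟨(Polynomial.monic_X.mul m2).sub_of_left (Polynomial.degree_lt_degree hlt), ?_⟩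
      rw [Polynomial.natDegree_sub_eq_left_of_natDegree_lt hlt, dX]

lemma symPowPoly_eval {K : Type*} [Field K] (x : K) (hx : x ≠ 0) (n : ℕ) :
    (symPowPoly K n).eval (x + x⁻¹) = symPow x n := by
  induction n using Nat.strong_induction_on with
  | _ n ih =>
    match n, ih with
    | 0, _ => simp [symPowPoly, symPow]
    | 1, _ => simp [symPowPoly, symPow]
    | 2, _ =>
      simp only [symPowPoly, symPow, Polynomial.eval_sub, Polynomial.eval_pow, Polynomial.eval_X,
        Polynomial.eval_ofNat]
      simp only [OfNat.ofNat_ne_zero, if_false]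
      field_simp
      ring
    | n + 3, ih =>
      rw [symPowPoly, Polynomial.eval_sub, Polynomial.eval_mul, Polynomial.eval_X,
        ih (n + 2) (by omega), ih (n + 1) (by omega)]
      simp only [symPow, Nat.add_eq_zero_iff, OfNat.ofNat_ne_zero, one_ne_zero, and_false,
        if_false, inv_pow]
      field_simp
      ring

/-- The passage from the alternant `det (symPow (q i) (r - 1 - j))` to the Vandermonde determinant
in the variables `q i + (q i)⁻¹`. -/
lemma det_symPow {K : Type*} [Field K] {r : ℕ} (q : Fin r → K) (hq : ∀ i, q i ≠ 0) :
    Matrix.det (Matrix.of fun i j : Fin r => symPow (q i) (r - 1 - j.val)) =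
      Matrix.det (Matrix.of fun i j : Fin r => (q i + (q i)⁻¹) ^ (r - 1 - j.val)) := by
  have h := Matrix.det_eval_matrixOfPolynomials_eq_det_vandermonde (fun i => q i + (q i)⁻¹)
    (fun j : Fin r => symPowPoly K j) (fun j => (symPowPoly_monic_natDegree K j).2)
    (fun j => (symPowPoly_monic_natDegree K j).1)
  have hrev : ∀ j : Fin r, r - 1 - j.val = (Fin.rev j).val := fun j => by
    rw [Fin.val_rev]; omega
  have e1 : (Matrix.of fun i j : Fin r => symPow (q i) (r - 1 - j.val)) =
      (Matrix.of fun i j : Fin r => (symPowPoly K j).eval (q i + (q i)⁻¹)).submatrix id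
        Fin.revPerm := by
    ext i j
    simp [symPowPoly_eval _ (hq i), hrev]
  have e2 : (Matrix.of fun i j : Fin r => (q i + (q i)⁻¹) ^ (r - 1 - j.val)) =
      (Matrix.vandermonde fun i => q i + (q i)⁻¹).submatrix id Fin.revPerm := by
    ext i j
    simp [Matrix.vandermonde_apply, hrev]
  rw [e1, e2, Matrix.det_permute', Matrix.det_permute', h]

/-! ### Generating functions -/

/-- The complete homogeneous polynomials are the coefficients of the product of the geometric
series `∑ xᵢⁿ tⁿ`. -/
lemma coeff_prod_geom {R : Type*} [CommRing R] {ι : Type*} [Fintype ι] [DecidableEq ι]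
    (x : ι → R) (m : ℕ) :
    PowerSeries.coeff m (∏ i, PowerSeries.mk fun n => x i ^ n) = hpoly x m := by
  rw [PowerSeries.coeff_prod, hpoly, if_neg (by omega)]
  simp only [PowerSeries.coeff_mk, Int.toNat_natCast]
  refine Finset.sum_bij' (fun d _ => ⇑d) (fun d _ => Finsupp.equivFunOnFinite.symm d)
    ?_ ?_ ?_ ?_ ?_
  · intro d hd
    have hs : ∑ i, d i = m := by
      have := (Finset.mem_finsuppAntidiag'.1 hd).1
      rwa [Finsupp.sum_fintype _ _ (by simp)] at this
    simp only [Finset.mem_filter, Fintype.mem_piFinset, Finset.mem_range]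
    refine ⟨fun i => ?_, hs⟩
    have := Finset.single_le_sum (f := fun i => d i) (fun _ _ => Nat.zero_le _)
      (Finset.mem_univ i)
    omega
  · intro d hd
    rw [Finset.mem_finsuppAntidiag']
    refine ⟨?_, by simp⟩
    rw [Finsupp.sum_fintype _ _ (by simp)]
    exact (Finset.mem_filter.1 hd).2
  · intro d _
    ext i
    simp
  · intro d _
    ext i
    simp
  · intro d _
    rfl

lemma hpoly_of_neg {R : Type*} [CommRing R] {ι : Type*} [Fintype ι] [DecidableEq ι]
    (x : ι → R) {m : ℤ} (hm : m < 0) : hpoly x m = 0 := if_pos hm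

lemma hpoly_zero {R : Type*} [CommRing R] {ι : Type*} [Fintype ι] [DecidableEq ι]
    (x : ι → R) : hpoly x 0 = 1 := by
  have := coeff_prod_geom x 0
  rw [PowerSeries.coeff_zero_eq_constantCoeff_apply, map_prod] at this
  simpa using this.symm

/-- The polynomial `(1 - x t) (1 - x⁻¹ t)`, expanded for `x ≠ 0`. -/
noncomputable def quad {K : Type*} [Field K] (x : K) : Polynomial K :=
  1 - Polynomial.C (x + x⁻¹) * Polynomial.X + Polynomial.X ^ 2

lemma quad_natDegree {K : Type*} [Field K] (x : K) : (quad x).natDegree ≤ 2 := by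
  unfold quad; compute_degree

lemma quad_reflect {K : Type*} [Field K] (x : K) : (quad x).reflect 2 = quad x := by
  have h := Polynomial.reflect_C_mul_X_pow 2 1 (c := x + x⁻¹)
  rw [pow_one] at h
  unfold quad
  rw [Polynomial.reflect_add, Polynomial.reflect_sub, h, Polynomial.reflect_monomial,
    Polynomial.reflect_one, Polynomial.revAt_le (by norm_num), Polynomial.revAt_le (by norm_num)]
  simp
  ring

lemma quad_mul_geom {K : Type*} [Field K] (x : K) (hx : x ≠ 0) :
    (quad x : PowerSeries K) * ((PowerSeries.mk fun n => x ^ n) *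
      PowerSeries.mk fun n => x⁻¹ ^ n) = 1 := by
  have h (y : K) : (1 - PowerSeries.C y * PowerSeries.X) * (PowerSeries.mk fun n => y ^ n) = 1 := by
    ext n
    rcases n with _ | n
    · simp [sub_mul, mul_assoc]
    · rw [sub_mul, one_mul, mul_assoc, map_sub, PowerSeries.coeff_C_mul,
        PowerSeries.coeff_succ_X_mul]
      simp [PowerSeries.coeff_one, pow_succ']
  have hquad : (quad x : PowerSeries K) = (1 - PowerSeries.C x * PowerSeries.X) *
      (1 - PowerSeries.C x⁻¹ * PowerSeries.X) := by
    have hc : PowerSeries.C x * PowerSeries.C x⁻¹ = (1 : PowerSeries K) := by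
      rw [← map_mul, mul_inv_cancel₀ hx, map_one]
    simp only [quad, Polynomial.coe_add, Polynomial.coe_sub, Polynomial.coe_one,
      Polynomial.coe_mul, Polynomial.coe_C, Polynomial.coe_X, Polynomial.coe_pow, map_add]
    linear_combination (-(PowerSeries.X : PowerSeries K) ^ 2) * hc
  rw [hquad]
  linear_combination
    (1 - PowerSeries.C x⁻¹ * PowerSeries.X) * (PowerSeries.mk fun n => x⁻¹ ^ n) * h x + h x⁻¹

/-- The generating function of `symPow x`. -/
lemma one_sub_sq_eq {K : Type*} [Field K] (x : K) (hx : x ≠ 0) :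
    ((1 - Polynomial.X ^ 2 : Polynomial K) : PowerSeries K) =
      (quad x : PowerSeries K) * PowerSeries.mk (symPow x) := by
  have e : (quad x : PowerSeries K) * PowerSeries.mk (symPow x) = PowerSeries.mk (symPow x)
      - PowerSeries.C (x + x⁻¹) * (PowerSeries.X * PowerSeries.mk (symPow x))
      + PowerSeries.X * (PowerSeries.X * PowerSeries.mk (symPow x)) := by
    simp only [quad, Polynomial.coe_add, Polynomial.coe_sub, Polynomial.coe_one,
      Polynomial.coe_mul, Polynomial.coe_C, Polynomial.coe_X, Polynomial.coe_pow]
    ring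
  rw [e]
  obtain ⟨s, hs⟩ : ∃ s, s = x + x⁻¹ := ⟨_, rfl⟩
  rw [← hs]
  ext n
  simp only [map_add, map_sub, PowerSeries.coeff_C_mul, PowerSeries.coeff_mk, Polynomial.coeff_coe,
    Polynomial.coeff_sub, Polynomial.coeff_one, Polynomial.coeff_X_pow]
  rcases n with _ | _ | _ | n
  · simp [symPow]
  · simp [PowerSeries.coeff_succ_X_mul, symPow, PowerSeries.coeff_zero_X_mul, hs]
  · simp only [PowerSeries.coeff_succ_X_mul, PowerSeries.coeff_mk, symPow]
    simp [hs]
    field_simp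
    ring
  · simp only [PowerSeries.coeff_succ_X_mul, PowerSeries.coeff_mk, symPow]
    simp [hs]
    field_simp
    ring

/-! ### Antipalindromic numerators -/

/-- The polynomial `(1 - t²) ∏_{l ≠ i} (1 - q_l t) (1 - q_l⁻¹ t)`. -/
noncomputable def numer {K : Type*} [Field K] {r : ℕ} (q : Fin r → K) (i : Fin r) :
    Polynomial K :=
  (1 - Polynomial.X ^ 2) * ∏ l ∈ Finset.univ.erase i, quad (q l)

/-- Palindromicity of a product of the factors `quad`, together with the degree bound on which
the multiplicativity of `Polynomial.reflect` depends. -/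
lemma prod_quad_reflect {K : Type*} [Field K] {ι : Type*} [DecidableEq ι] (q : ι → K)
    (s : Finset ι) :
    (∏ l ∈ s, quad (q l)).natDegree ≤ 2 * s.card ∧
      (∏ l ∈ s, quad (q l)).reflect (2 * s.card) = ∏ l ∈ s, quad (q l) := by
  induction s using Finset.induction_on with
  | empty => simp
  | insert a s ha ih =>
    rw [Finset.prod_insert ha, Finset.card_insert_of_notMem ha,
      show 2 * (s.card + 1) = 2 + 2 * s.card by ring]
    refine ⟨Polynomial.natDegree_mul_le.trans (add_le_add (quad_natDegree _) ih.1), ?_⟩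
    rw [Polynomial.reflect_mul _ _ (quad_natDegree _) ih.1, quad_reflect, ih.2]

lemma numer_reflect {K : Type*} [Field K] {r : ℕ} (q : Fin r → K) (i : Fin r) :
    (numer q i).natDegree ≤ 2 * r ∧ (numer q i).reflect (2 * r) = -numer q i := by
  obtain ⟨h1, h2⟩ := prod_quad_reflect q (Finset.univ.erase i)
  have hcard : 2 * r = 2 + 2 * (Finset.univ.erase i).card := by
    have := i.2
    rw [Finset.card_erase_of_mem (Finset.mem_univ i), Finset.card_univ, Fintype.card_fin]
    omega
  have hd : (1 - Polynomial.X ^ 2 : Polynomial K).natDegree ≤ 2 := by compute_degree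
  have hr : (1 - Polynomial.X ^ 2 : Polynomial K).reflect 2 = -(1 - Polynomial.X ^ 2) := by
    rw [Polynomial.reflect_sub, Polynomial.reflect_monomial, Polynomial.reflect_one,
      Polynomial.revAt_le le_rfl]
    simp
  rw [hcard]
  refine ⟨Polynomial.natDegree_mul_le.trans (add_le_add hd h1), ?_⟩
  rw [numer, Polynomial.reflect_mul _ _ hd h1, hr, h2, neg_mul]

/-- All factors but the `i`-th cancel between `numer q i` and the generating function of the
complete homogeneous polynomials. -/
lemma numer_mul_gen {K : Type*} [Field K] {r : ℕ} (q : Fin r → K) (hq : ∀ i, q i ≠ 0)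
    (i : Fin r) :
    (numer q i : PowerSeries K) *
      PowerSeries.mk (fun m : ℕ => hpoly (Sum.elim q fun i => (q i)⁻¹) m) =
      PowerSeries.mk (symPow (q i)) := by
  have hH : PowerSeries.mk (fun m : ℕ => hpoly (Sum.elim q fun i => (q i)⁻¹) m) =
      ∏ l, ((PowerSeries.mk fun n => q l ^ n) * PowerSeries.mk fun n => (q l)⁻¹ ^ n) := by
    ext m
    rw [PowerSeries.coeff_mk, ← coeff_prod_geom, Fintype.prod_sum_type, Finset.prod_mul_distrib]
    simp
  have hcoe : ((∏ l ∈ Finset.univ.erase i, quad (q l) : Polynomial K) : PowerSeries K) =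
      ∏ l ∈ Finset.univ.erase i, (quad (q l) : PowerSeries K) := by
    simp only [← Polynomial.coeToPowerSeries.ringHom_apply, map_prod]
  have hcancel : (∏ l ∈ Finset.univ.erase i, (quad (q l) : PowerSeries K)) *
      ∏ l ∈ Finset.univ.erase i,
        ((PowerSeries.mk fun n => q l ^ n) * PowerSeries.mk fun n => (q l)⁻¹ ^ n) = 1 := by
    rw [← Finset.prod_mul_distrib]
    exact Finset.prod_eq_one fun l _ => quad_mul_geom _ (hq l)
  rw [hH, ← Finset.mul_prod_erase _ _ (Finset.mem_univ i), numer, Polynomial.coe_mul, hcoe,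
    one_sub_sq_eq _ (hq i)]
  have h1 := quad_mul_geom _ (hq i)
  set G := (PowerSeries.mk fun n => q i ^ n) * PowerSeries.mk fun n => (q i)⁻¹ ^ n
  linear_combination (quad (q i) : PowerSeries K) * PowerSeries.mk (symPow (q i)) * G * hcancel
    + PowerSeries.mk (symPow (q i)) * h1

/-! ### Factorization of the alternant -/

/-- `symPow (q i) a` as a combination of differences of complete homogeneous polynomials, with
coefficients independent of `a`. The antipalindromicity of `numer q i` pairs the coefficients of
`t ^ k` and `t ^ (2 * r - k)` and, in characteristic zero, removes that of `t ^ r`. -/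
lemma symPow_eq_sum {K : Type*} [Field K] [CharZero K] {r : ℕ} (q : Fin r → K)
    (hq : ∀ i, q i ≠ 0) (i : Fin r) (a : ℕ) :
    symPow (q i) a = ∑ k ∈ Finset.range r, (numer q i).coeff k *
      (hpoly (Sum.elim q fun i => (q i)⁻¹) ((a : ℤ) - k) -
        hpoly (Sum.elim q fun i => (q i)⁻¹) ((a : ℤ) - 2 * r + k)) := by
  obtain ⟨hdeg, href⟩ := numer_reflect q i
  set H := hpoly (Sum.elim q fun i => (q i)⁻¹) with hHdef
  set c := (numer q i).coeff
  have hc : ∀ k ≤ 2 * r, c (2 * r - k) = -c k := by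
    intro k hk
    have := congrArg (fun p => Polynomial.coeff p k) href
    simpa only [Polynomial.coeff_reflect, Polynomial.revAt_le hk, Polynomial.coeff_neg] using this
  have hcr : c r = 0 := by
    have := hc r (by omega)
    rw [show 2 * r - r = r by omega] at this
    exact self_eq_neg.1 this
  -- The convolution is taken over a fixed range, as `H` vanishes at negative arguments.
  have hconv : symPow (q i) a = ∑ k ∈ Finset.range (2 * r + 1), c k * H ((a : ℤ) - k) := by
    have h := congrArg (PowerSeries.coeff a) (numer_mul_gen q hq i)
    rw [PowerSeries.coeff_mk, PowerSeries.coeff_mul,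
      Finset.Nat.sum_antidiagonal_eq_sum_range_succ_mk] at h
    simp only [PowerSeries.coeff_mk, Polynomial.coeff_coe] at h
    rw [← h]
    have e1 : ∑ k ∈ Finset.range (a + 1), c k * H ((a - k : ℕ) : ℤ) =
        ∑ k ∈ Finset.range (a + 1), c k * H ((a : ℤ) - k) := by
      refine Finset.sum_congr rfl fun k hk => ?_
      rw [Finset.mem_range] at hk
      rw [Nat.cast_sub (by omega)]
    have e2 : ∑ k ∈ Finset.range (a + 1), c k * H ((a : ℤ) - k) =
        ∑ k ∈ Finset.range (a + 1 + (2 * r + 1)), c k * H ((a : ℤ) - k) := by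
      refine Finset.sum_subset (Finset.range_mono (by omega)) fun k _ hk => ?_
      rw [Finset.mem_range] at hk
      rw [hHdef, hpoly_of_neg _ (by omega), mul_zero]
    have e3 : ∑ k ∈ Finset.range (2 * r + 1), c k * H ((a : ℤ) - k) =
        ∑ k ∈ Finset.range (a + 1 + (2 * r + 1)), c k * H ((a : ℤ) - k) := by
      refine Finset.sum_subset (Finset.range_mono (by omega)) fun k _ hk => ?_
      rw [Finset.mem_range] at hk
      have : c k = 0 := Polynomial.coeff_eq_zero_of_natDegree_lt (by omega)
      rw [this, zero_mul]
    exact e1.trans (e2.trans e3.symm)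
  rw [hconv, show 2 * r + 1 = r + 1 + r by ring, Finset.sum_range_add, Finset.sum_range_succ, hcr,
    zero_mul, add_zero, ← Finset.sum_range_reflect (fun k => c (r + 1 + k) * _),
    ← Finset.sum_add_distrib]
  refine Finset.sum_congr rfl fun k hk => ?_
  rw [Finset.mem_range] at hk
  have h1 : r + 1 + (r - 1 - k) = 2 * r - k := by omega
  have h2 : (a : ℤ) - ((2 * r - k : ℕ) : ℤ) = a - 2 * r + k := by omega
  rw [h1, hc k (by omega), h2]
  ring

/-- The matrix factorization: the rows are indexed so that row `k` of the Jacobi–Trudi matrix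
meets the coefficient of `t ^ (r - 1 - k)`. -/
lemma det_symPow_eq {K : Type*} [Field K] [CharZero K] {r : ℕ} (q : Fin r → K)
    (hq : ∀ i, q i ≠ 0) (lam : Fin r → ℤ) (a : Fin r → ℕ)
    (ha : ∀ j, (a j : ℤ) = lam j + r - 1 - (j.val : ℤ)) :
    Matrix.det (Matrix.of fun i j : Fin r => symPow (q i) (a j)) =
      Matrix.det (Matrix.of fun i k : Fin r => (numer q i).coeff (r - 1 - k.val)) *
      Matrix.det (Matrix.of fun i j : Fin r =>
        hpoly (Sum.elim q fun i => (q i)⁻¹) (lam j + (i.val : ℤ) - (j.val : ℤ)) -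
        hpoly (Sum.elim q fun i => (q i)⁻¹) (lam j - (i.val : ℤ) - (j.val : ℤ) - 2)) := by
  rw [← Matrix.det_mul]
  congr 1
  ext i j
  rw [Matrix.of_apply, symPow_eq_sum q hq, ← Finset.sum_range_reflect, Finset.sum_range,
    Matrix.mul_apply]
  refine Finset.sum_congr rfl fun k _ => ?_
  have hk := k.2
  have h1 : (a j : ℤ) - ((r - 1 - k.val : ℕ) : ℤ) = lam j + (k.val : ℤ) - (j.val : ℤ) := by
    have := ha j; omega
  have h2 : (a j : ℤ) - 2 * r + ((r - 1 - k.val : ℕ) : ℤ)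
      = lam j - (k.val : ℤ) - (j.val : ℤ) - 2 := by
    have := ha j; omega
  rw [h1, h2, Matrix.of_apply, Matrix.of_apply]

/-- For the zero weight the Jacobi–Trudi matrix is unitriangular, so the coefficient determinant
is the alternant of the zero weight. -/
lemma det_numer_coeff {K : Type*} [Field K] [CharZero K] {r : ℕ} (q : Fin r → K)
    (hq : ∀ i, q i ≠ 0) :
    Matrix.det (Matrix.of fun i k : Fin r => (numer q i).coeff (r - 1 - k.val)) =
      Matrix.det (Matrix.of fun i j : Fin r => (q i + (q i)⁻¹) ^ (r - 1 - j.val)) := by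
  rw [← det_symPow q hq,
    det_symPow_eq q hq (fun _ => 0) (fun j => r - 1 - j.val) (fun j => by have := j.2; omega)]
  set H := hpoly (Sum.elim q fun i => (q i)⁻¹) with hHdef
  suffices h : Matrix.det (Matrix.of fun i j : Fin r =>
      H (0 + (i.val : ℤ) - (j.val : ℤ)) - H (0 - (i.val : ℤ) - (j.val : ℤ) - 2)) = 1 by
    rw [h, mul_one]
  rw [Matrix.det_of_isLowerTriangular]
  · refine Finset.prod_eq_one fun i _ => ?_
    rw [Matrix.of_apply, show 0 + (i.val : ℤ) - (i.val : ℤ) = 0 by ring, hHdef, hpoly_zero,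
      hpoly_of_neg _ (by omega), sub_zero]
  · intro i j hij
    have hij' : i.val < j.val := hij
    rw [Matrix.of_apply, hHdef, hpoly_of_neg _ (by omega), hpoly_of_neg _ (by omega), sub_zero]

/-- The identity for arbitrary nonzero elements of a field of characteristic zero, with `l` the last
index. -/
lemma jacobi_trudi_of_ne_zero {K : Type*} [Field K] [CharZero K] {r : ℕ}
    (lam : Fin r → ℤ) (hanti : Antitone lam) (l : Fin r) (hl : l.val = r - 1)
    (hlast : lam l = 0)
    (q : Fin r → K) (hq : ∀ i, q i ≠ 0) :
    Matrix.det (Matrix.of fun i j : Fin r =>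
        q i ^ (lam j + r - 1 - (j.val : ℤ)) + q i ^ (-(lam j + r - 1 - (j.val : ℤ)))) =
    2 *
    Matrix.det (Matrix.of fun i j : Fin r =>
        hpoly (Sum.elim q fun i => (q i)⁻¹) (lam j + (i.val : ℤ) - (j.val : ℤ)) -
        hpoly (Sum.elim q fun i => (q i)⁻¹) (lam j - (i.val : ℤ) - (j.val : ℤ) - 2)) *
    Matrix.det (Matrix.of fun i j : Fin r =>
        (q i + (q i)⁻¹) ^ (r - 1 - j.val)) := by
  have hnn : ∀ j, 0 ≤ lam j := fun j => by
    rw [← hlast]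
    exact hanti (Fin.le_def.2 (by omega))
  obtain ⟨a, ha⟩ : ∃ a : Fin r → ℕ, ∀ j, (a j : ℤ) = lam j + r - 1 - (j.val : ℤ) :=
    ⟨fun j => (lam j + r - 1 - (j.val : ℤ)).toNat, fun j =>
      Int.toNat_of_nonneg (by have := hnn j; have := j.2; omega)⟩
  -- The exponent vanishes in the last column only, where `q ^ 0 + q ^ 0` is twice `symPow q 0`.
  have hmat : (Matrix.of fun i j : Fin r =>
      q i ^ (lam j + r - 1 - (j.val : ℤ)) + q i ^ (-(lam j + r - 1 - (j.val : ℤ)))) =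
      (Matrix.of fun i j : Fin r => symPow (q i) (a j)) *
        Matrix.diagonal fun j => if j = l then 2 else 1 := by
    ext i j
    rw [Matrix.mul_diagonal, Matrix.of_apply, Matrix.of_apply, ← ha j, zpow_neg, zpow_natCast,
      symPow]
    have haj := ha j
    have hnj := hnn j
    have hj := j.2
    by_cases h : j = l
    · have : a j = 0 := by
        rw [h, hlast] at haj
        rw [h]
        omega
      rw [if_pos h, this]
      norm_num
    · have hne : j.val ≠ r - 1 := fun e => h (Fin.ext (e.trans hl.symm))
      rw [if_neg h, if_neg (by omega), mul_one, inv_pow]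
  rw [hmat, Matrix.det_mul, Matrix.det_diagonal, Finset.prod_ite_eq' Finset.univ,
    if_pos (Finset.mem_univ _), det_symPow_eq q hq lam a ha, det_numer_coeff q hq]
  ring

/-- Jacobi–Trudy identity for the symmetric tensor representations of Spin(2r)
(those with λ_r = 0), in alternant form. -/
theorem spin_even_symmetric_tensor_jacobi_trudy (r : ℕ) (hr : 1 ≤ r)
    (lam : Fin r → ℤ) (hanti : Antitone lam) (hlast : lam ⟨r - 1, by omega⟩ = 0) :
    let K := FractionRing (MvPolynomial (Fin r) ℚ)
    let q : Fin r → K := fun i => algebraMap (MvPolynomial (Fin r) ℚ) K (X i)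
    let H : ℤ → K := hpoly (Sum.elim q fun i => (q i)⁻¹)
    Matrix.det (Matrix.of fun i j : Fin r =>
        q i ^ (lam j + r - 1 - (j.val : ℤ)) + q i ^ (-(lam j + r - 1 - (j.val : ℤ)))) =
    2 *
    Matrix.det (Matrix.of fun i j : Fin r =>
        H (lam j + (i.val : ℤ) - (j.val : ℤ)) - H (lam j - (i.val : ℤ) - (j.val : ℤ) - 2)) *
    Matrix.det (Matrix.of fun i j : Fin r =>
        (q i + (q i)⁻¹) ^ (r - 1 - j.val)) := by
  intro K q H
  refine jacobi_trudi_of_ne_zero lam hanti _ rfl hlast q fun i => ?_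
  exact (map_ne_zero_iff _ (IsFractionRing.injective (MvPolynomial (Fin r) ℚ) K)).2
    (MvPolynomial.X_ne_zero i)
end

section
/- Work in the field ℚ(t_1,t_2) of rational functions in two indeterminates over ℚ, and let h_m denote the complete homogeneous symmetric polynomial of degree m in the four elements t_1, t_1^{−1}, t_2, t_2^{−1}. For all integers m_1, m_2 ≥ 0, the 2×2 determinant A_{m_1 m_2} = det[ t_j^{j − m_i} − t_j^{j + m_i} ]_{i,j=1}^{2} (row i, column j) factors as A_{m_1 m_2} = (1 − t_1^2)(1 − t_2^2)(1 − t_1 t_2)(1 − t_1^{−1} t_2) · ( h_{m_2 − 2}·(h_{m_1 − 1} + h_{m_1 − 3}) − (h_{m_2 − 1} + h_{m_2 − 3})·h_{m_1 − 2} ). -/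
/-! Write `a, b` for the two indeterminates and set `T_a = a + a⁻¹`, `σ_m(a) = a ^ m - a ^ (-m)`.
The generating series of the `h_m` is the product of the four geometric series in
`a, a⁻¹, b, b⁻¹`, i.e. `1 / ((1 - T_a z + z²) (1 - T_b z + z²))`. Since
`(T_a - T_b) z` is the difference of the two factors, partial fractions give the closed form
`hpoly_mul_eq` expressing `h_{m-2}` through `σ_m(a)` and `σ_m(b)`; it stays true
for the values `m = -1, 0, 1` where `h_{m-2} = 0`. Because `σ_{m+1} + σ_{m-1} = T σ_m`, the sums
`h_{m-1} + h_{m-3}` have a similar closed form, and the last factor on the right-hand side,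
multiplied by the nonzero element `(a - a⁻¹) (b - b⁻¹) (T_a - T_b)`, becomes the determinant
`σ_{m₂}(a) σ_{m₁}(b) - σ_{m₂}(b) σ_{m₁}(a)`, which is `A_{m₁ m₂}` divided by `-a b²`. -/

open Finset MvPolynomial

/-- The geometric series `∑ aⁿ zⁿ = 1 / (1 - a z)`. -/
noncomputable def geomSeries {R : Type*} [CommRing R] (a : R) : PowerSeries R :=
  PowerSeries.mk fun n => a ^ n

lemma one_sub_mul_geomSeries {R : Type*} [CommRing R] (a : R) :
    (1 - PowerSeries.C a * PowerSeries.X) * geomSeries a = 1 := by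
  ext n
  cases n with
  | zero => simp [geomSeries, sub_mul, mul_assoc]
  | succ n =>
    simp [geomSeries, sub_mul, mul_assoc, PowerSeries.coeff_succ_X_mul, PowerSeries.coeff_one,
      pow_succ']

/-- The generating series of the complete homogeneous symmetric polynomials. -/
lemma hpoly_natCast {R : Type*} [CommRing R] {ι : Type*} [Fintype ι] [DecidableEq ι]
    (x : ι → R) (n : ℕ) :
    hpoly x (n : ℤ) = PowerSeries.coeff n (∏ i, geomSeries (x i)) := by
  rw [PowerSeries.coeff_prod, hpoly, if_neg (by omega), Int.toNat_natCast]
  refine Finset.sum_bij' (fun d _ => Finsupp.equivFunOnFinite.symm d) (fun l _ => ⇑l)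
    ?_ ?_ ?_ ?_ ?_
  · intro d hd
    simpa using (Finset.mem_filter.1 hd).2
  · intro l hl
    have hl' : ∑ i, l i = n := by simpa using hl
    simp only [Finset.mem_filter, Fintype.mem_piFinset, Finset.mem_range]
    refine ⟨fun i => ?_, hl'⟩
    have := Finset.single_le_sum (f := fun i => l i) (fun _ _ => Nat.zero_le _)
      (Finset.mem_univ i)
    omega
  · intro d _
    rfl
  · intro l _
    ext i
    rfl
  · intro d _
    simp [geomSeries]

/-- Partial fractions for the product of the geometric series in `a, r, b, s`, where `r` and `s`
are inverse to `a` and `b`. -/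
lemma geomSeries_partialFractions {R : Type*} [CommRing R] {a r b s : R}
    (ha : a * r = 1) (hb : b * s = 1) :
    PowerSeries.C ((a - r) * (b - s) * (a + r - b - s)) *
        (PowerSeries.X * (geomSeries a * geomSeries r * (geomSeries b * geomSeries s))) =
      PowerSeries.C (b - s) *
          (PowerSeries.C a * geomSeries a - PowerSeries.C r * geomSeries r) -
        PowerSeries.C (a - r) *
          (PowerSeries.C b * geomSeries b - PowerSeries.C s * geomSeries s) := by
  -- `(c - d) G_c G_d = c G_c - d G_d`
  have key (c d : R) : PowerSeries.C (c - d) * (geomSeries c * geomSeries d) =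
      PowerSeries.C c * geomSeries c - PowerSeries.C d * geomSeries d := by
    have h1 := one_sub_mul_geomSeries c
    have h2 := one_sub_mul_geomSeries d
    rw [map_sub]
    linear_combination (PowerSeries.C c * geomSeries c) * h2 -
      (PowerSeries.C d * geomSeries d) * h1
  -- `G_c G_d` is inverse to `1 - (c + d) z + z²`
  have quad (c d : R) (h : c * d = 1) :
      (1 - PowerSeries.C (c + d) * PowerSeries.X + PowerSeries.X ^ 2) *
        (geomSeries c * geomSeries d) = 1 := by
    have h1 := one_sub_mul_geomSeries c
    have h2 := one_sub_mul_geomSeries d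
    have h3 : (PowerSeries.C c * PowerSeries.C d : PowerSeries R) = 1 := by
      rw [← map_mul, h, map_one]
    rw [map_add]
    linear_combination ((1 - PowerSeries.C d * PowerSeries.X) * geomSeries d) * h1 + h2 -
      PowerSeries.X ^ 2 * geomSeries c * geomSeries d * h3
  rw [← key a r, ← key b s]
  have qa := quad a r ha
  have qb := quad b s hb
  simp only [map_sub, map_add, map_mul] at qa qb ⊢
  generalize geomSeries a * geomSeries r = F at *
  generalize geomSeries b * geomSeries s = G at *
  linear_combination ((PowerSeries.C a - PowerSeries.C r) *
    (PowerSeries.C b - PowerSeries.C s)) * (F * qb - G * qa)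

/-- Closed form of `h_m` in `a, a⁻¹, b, b⁻¹`, valid down to `m = -3`. -/
lemma hpoly_mul_eq {K : Type*} [Field K] (t : Fin 2 → K) (h0 : t 0 ≠ 0) (h1 : t 1 ≠ 0)
    (m : ℤ) (hm : -3 ≤ m) :
    (t 0 - (t 0)⁻¹) * (t 1 - (t 1)⁻¹) * (t 0 + (t 0)⁻¹ - t 1 - (t 1)⁻¹) *
        hpoly (Sum.elim t fun i => (t i)⁻¹) m =
      (t 1 - (t 1)⁻¹) * (t 0 ^ (m + 2) - t 0 ^ (-(m + 2))) -
        (t 0 - (t 0)⁻¹) * (t 1 ^ (m + 2) - t 1 ^ (-(m + 2))) := by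
  rcases lt_or_ge m 0 with hneg | hpos
  · -- the closed form vanishes at `m = -3, -2, -1`
    have : m = -3 ∨ m = -2 ∨ m = -1 := by omega
    rw [hpoly, if_pos hneg]
    rcases this with rfl | rfl | rfl <;> norm_num <;> ring
  · lift m to ℕ using hpos
    have H := congrArg (PowerSeries.coeff (m + 1))
      (geomSeries_partialFractions (mul_inv_cancel₀ h0) (mul_inv_cancel₀ h1))
    have hprod : (∏ i, geomSeries (Sum.elim t (fun i => (t i)⁻¹) i)) =
        geomSeries (t 0) * geomSeries (t 0)⁻¹ * (geomSeries (t 1) * geomSeries (t 1)⁻¹) := by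
      simp only [Fintype.prod_sum_type, Fin.prod_univ_two, Sum.elim_inl, Sum.elim_inr]
      ring
    rw [hpoly_natCast, hprod]
    simp only [map_sub (PowerSeries.coeff (m + 1)), PowerSeries.coeff_C_mul,
      PowerSeries.coeff_succ_X_mul] at H
    rw [H]
    have e : ((m : ℤ) + 2) = ((m + 2 : ℕ) : ℤ) := by push_cast; ring
    rw [e]
    simp only [zpow_neg, zpow_natCast, geomSeries, PowerSeries.coeff_mk, ← inv_pow]
    ring

/-- The product of the factors that occur as denominators is nonzero: it does not vanish at
`(2, 3)`. -/
lemma denominator_ne_zero :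
    ((X 0 ^ 2 - 1) * (X 1 ^ 2 - 1) * ((X 0 - X 1) * (X 0 * X 1 - 1)) :
      MvPolynomial (Fin 2) ℚ) ≠ 0 := by
  intro h
  have := congrArg (MvPolynomial.eval ![2, 3]) h
  norm_num at this

/-- The factorization in an arbitrary field, away from the zeros of the denominators. -/
lemma alternant_factorization_of_field {K : Type*} [Field K] (t : Fin 2 → K)
    (hX : ∀ i, t i ≠ 0)
    (hD : (t 0 ^ 2 - 1) * (t 1 ^ 2 - 1) * ((t 0 - t 1) * (t 0 * t 1 - 1)) ≠ 0)
    (m : Fin 2 → ℤ) (hm : ∀ i, 0 ≤ m i) (h : ℤ → K)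
    (hh : h = hpoly (Sum.elim t fun i => (t i)⁻¹)) :
    Matrix.det (Matrix.of fun i j : Fin 2 =>
        t j ^ (((j.val : ℤ) + 1) - m i) - t j ^ (((j.val : ℤ) + 1) + m i)) =
    (1 - t 0 ^ 2) * (1 - t 1 ^ 2) * (1 - t 0 * t 1) * (1 - (t 0)⁻¹ * t 1) *
      (h (m 1 - 2) * (h (m 0 - 1) + h (m 0 - 3)) -
       (h (m 1 - 1) + h (m 1 - 3)) * h (m 0 - 2)) := by
  have closed (k : ℤ) (hk : -3 ≤ k) := hpoly_mul_eq t (hX 0) (hX 1) k hk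
  rw [← hh] at closed
  clear hh
  have h0 := hX 0
  have h1 := hX 1
  simp only [Matrix.det_fin_two, Matrix.of_apply]
  generalize t 0 = a at *
  generalize t 1 = b at *
  have single (i : Fin 2) := closed (m i - 2) (by linarith [hm i])
  -- `c ^ (m + 1) + c ^ (m - 1) = (c + c⁻¹) c ^ m` in each variable
  have double (i : Fin 2) : (a - a⁻¹) * (b - b⁻¹) * (a + a⁻¹ - b - b⁻¹) *
      (h (m i - 1) + h (m i - 3)) =
      (b - b⁻¹) * ((a + a⁻¹) * (a ^ m i - a ^ (-m i))) -
        (a - a⁻¹) * ((b + b⁻¹) * (b ^ m i - b ^ (-m i))) := by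
    have e1 := closed (m i - 1) (by linarith [hm i])
    have e2 := closed (m i - 3) (by linarith [hm i])
    rw [show m i - 1 + 2 = m i + 1 by ring, show -(m i + 1) = -m i - 1 by ring,
      zpow_add_one₀ h0, zpow_add_one₀ h1, zpow_sub_one₀ h0, zpow_sub_one₀ h1] at e1
    rw [show m i - 3 + 2 = m i - 1 by ring, show -(m i - 1) = -m i + 1 by ring,
      zpow_add_one₀ h0, zpow_add_one₀ h1, zpow_sub_one₀ h0, zpow_sub_one₀ h1] at e2
    linear_combination e1 + e2
  simp only [sub_add_cancel] at single
  have s0 := single 0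
  have s1 := single 1
  have d0 := double 0
  have d1 := double 1
  have hK : (a - a⁻¹) * (b - b⁻¹) * (a + a⁻¹ - b - b⁻¹) ≠ 0 := by
    intro hz
    apply hD
    have : (a ^ 2 - 1) * (b ^ 2 - 1) * ((a - b) * (a * b - 1)) =
        (a * b) ^ 2 * ((a - a⁻¹) * (b - b⁻¹) * (a + a⁻¹ - b - b⁻¹)) := by
      field_simp
      ring
    rw [this, hz, mul_zero]
  -- the bracket of the theorem, up to the common denominator
  have bracket : (a - a⁻¹) * (b - b⁻¹) * (a + a⁻¹ - b - b⁻¹) *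
      (h (m 1 - 2) * (h (m 0 - 1) + h (m 0 - 3)) -
        (h (m 1 - 1) + h (m 1 - 3)) * h (m 0 - 2)) =
      (a ^ m 1 - a ^ (-m 1)) * (b ^ m 0 - b ^ (-m 0)) -
        (b ^ m 1 - b ^ (-m 1)) * (a ^ m 0 - a ^ (-m 0)) := by
    apply mul_left_cancel₀ hK
    generalize h (m 0 - 1) + h (m 0 - 3) = u0 at *
    generalize h (m 1 - 1) + h (m 1 - 3) = u1 at *
    generalize h (m 0 - 2) = v0 at *
    generalize h (m 1 - 2) = v1 at *
    generalize hk : (a - a⁻¹) * (b - b⁻¹) * (a + a⁻¹ - b - b⁻¹) = k at *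
    calc _ = k * v1 * (k * u0) - k * u1 * (k * v0) := by ring
      _ = _ := by
        rw [s0, s1, d0, d1, ← hk]
        ring
  have factor : (1 - a ^ 2) * (1 - b ^ 2) * (1 - a * b) * (1 - a⁻¹ * b) =
      -(a * b ^ 2) * ((a - a⁻¹) * (b - b⁻¹) * (a + a⁻¹ - b - b⁻¹)) := by
    field_simp
    ring
  rw [factor, mul_assoc, bracket]
  -- each entry of column `j` is `-t_j ^ (j + 1)` times an antisymmetric difference (`j = 0, 1`)
  have split (c : K) (hc : c ≠ 0) (n : ℕ) (k : ℤ) :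
      c ^ ((n : ℤ) + 1 - k) - c ^ ((n : ℤ) + 1 + k) = -(c ^ (n + 1)) * (c ^ k - c ^ (-k)) := by
    rw [sub_eq_add_neg ((n : ℤ) + 1), zpow_add₀ hc _ (-k), zpow_add₀ hc _ k, ← Nat.cast_add_one, zpow_natCast]
    ring
  simp only [split a h0, split b h1, Fin.val_zero, Fin.val_one]
  ring

/-- Factorization of the 2×2 alternant determinant A_{m₁m₂} in ℚ(t₁,t₂): the Sp(4)-character
relation underlying the Spin(2r+1) fusion-ideal computation. -/
theorem sp4_alternant_factorization
    (m : Fin 2 → ℤ) (hm : ∀ i, 0 ≤ m i) :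
    let K := FractionRing (MvPolynomial (Fin 2) ℚ)
    let t : Fin 2 → K := fun i => algebraMap (MvPolynomial (Fin 2) ℚ) K (X i)
    let h : ℤ → K := hpoly (Sum.elim t fun i => (t i)⁻¹)
    Matrix.det (Matrix.of fun i j : Fin 2 =>
        t j ^ (((j.val : ℤ) + 1) - m i) - t j ^ (((j.val : ℤ) + 1) + m i)) =
    (1 - t 0 ^ 2) * (1 - t 1 ^ 2) * (1 - t 0 * t 1) * (1 - (t 0)⁻¹ * t 1) *
      (h (m 1 - 2) * (h (m 0 - 1) + h (m 0 - 3)) -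
       (h (m 1 - 1) + h (m 1 - 3)) * h (m 0 - 2)) := by
  intro K t h
  have hX (i : Fin 2) : t i ≠ 0 := by
    simp [t]
  have hD : (t 0 ^ 2 - 1) * (t 1 ^ 2 - 1) * ((t 0 - t 1) * (t 0 * t 1 - 1)) ≠ 0 := by
    have := (map_ne_zero_iff (algebraMap (MvPolynomial (Fin 2) ℚ) K)
      (IsFractionRing.injective _ _)).2 denominator_ne_zero
    simpa [t] using this
  exact alternant_factorization_of_field t hX hD m hm h rfl
end
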